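/- arXiv:2008.08820 — 2 statements merged into one kernel-verified Lean document; each statement's English description precedes it below -/
import Mathlib

section
/- Let r ≥ 1 and let L = {k₁, …, k_r} be a set of r distinct integers all ≥ 2. Then there exists a reduced, finitely generated, atomic, commutative cancellative monoid H whose set of atoms consists of pairwise distinct elements u_{i,j} for 1 ≤ j ≤ k_i, 1 ≤ i ≤ r, with the following properties: (a) u_{1,1}⋯u_{1,k₁} = u_{2,1}⋯u_{2,k₂} = … = u_{r,1}⋯u_{r,k_r}; (b) every b ∈ H not divisible by u_{1,1}⋯u_{1,k₁} has exactly one factorization into atoms (i.e., a unique multiset of atoms with product b); (c) for every a ∈ H there are a unique n ∈ ℕ₀ and a unique b ∈ H not divisible by u_{1,1}⋯u_{1,k₁} such that a = (u_{1,1}⋯u_{1,k₁})ⁿ b and L(a) = nL + L(b). Moreover, 𝓛(H) = { {0}, {1} } ∪ { y + nL : y, n ∈ ℕ₀ }. -/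
open Pointwise

/-- `H` is atomic: every non-unit is a finite product of atoms (irreducible elements). -/
def MonoidAtomic (H : Type*) [CancelCommMonoid H] : Prop :=
  ∀ a : H, ¬ IsUnit a → ∃ l : Multiset H, (∀ x ∈ l, Irreducible x) ∧ l.prod = a

/-- `H` is reduced: the only unit is the identity. -/
def MonoidReduced (H : Type*) [CancelCommMonoid H] : Prop :=
  ∀ a : H, IsUnit a → a = 1

/-- The set of lengths `L(a)`: all `k ≥ 1` such that `a` is a product of `k` atoms,
together with `0` if `a` is a unit. -/
def setOfLengths {H : Type*} [CancelCommMonoid H] (a : H) : Set ℕ :=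
  {k | (k = 0 ∧ IsUnit a) ∨
    (1 ≤ k ∧ ∃ l : Multiset H, Multiset.card l = k ∧ (∀ x ∈ l, Irreducible x) ∧ l.prod = a)}

/-- The system of sets of lengths `𝓛(H) = { L(a) : a ∈ H }`. -/
def systemOfLengths (H : Type*) [CancelCommMonoid H] : Set (Set ℕ) :=
  {L | ∃ a : H, setOfLengths a = L}

/-- The `n`-fold sumset `nL = L + … + L`, with `0L = {0}`. -/
def nfoldSumset (L : Set ℕ) : ℕ → Set ℕ
  | 0 => {0}
  | n + 1 => L + nfoldSumset L n

/-!
Start from the free commutative monoid on the disjoint union of blocks of sizes `kᵢ` and identify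
the products `W` of all blocks. A multiset of generators is uniquely a sum of whole blocks plus a
remainder containing no whole block, and two multisets have the same product exactly when their
remainders agree and they contain the same number of whole blocks. Hence the factorizations of
`Wⁿ b`, for a block-free `b`, are obtained by choosing `n` blocks, and their lengths are the sums
of `n` of the `kᵢ` plus the length of `b`.
-/

section Sumsets

variable {ι : Type*}

theorem nfoldSumset_range (k : ι → ℕ) (n : ℕ) :
    nfoldSumset (Set.range k) n =
      (fun c : Multiset ι => (c.map k).sum) '' {c | c.card = n} := by
  induction n with
  | zero => simp [nfoldSumset]
  | succ n ih =>
    ext x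
    rw [nfoldSumset, ih]
    constructor
    · rintro ⟨_, ⟨i, rfl⟩, _, ⟨c, rfl, rfl⟩, rfl⟩
      exact ⟨i ::ₘ c, Multiset.card_cons i c, by simp⟩
    · rintro ⟨c, hc, rfl⟩
      obtain ⟨i, c, rfl, -⟩ := Multiset.card_eq_succ_iff.1 hc
      exact ⟨k i, ⟨i, rfl⟩, (c.map k).sum, ⟨c, by simpa using hc, rfl⟩, by simp⟩

end Sumsets

/-- A family `u` generating the commutative monoid `H` such that each `u s` is a product of members
of the family only trivially. Such a monoid is reduced and its atoms are the `u s`. Factorizations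
are encoded by multisets of indices. -/
structure IsAtomSystem {σ H : Type*} [CommMonoid H] (u : σ → H) : Prop where
  exists_prod_eq : ∀ a, ∃ m : Multiset σ, (m.map u).prod = a
  eq_singleton : ∀ {m : Multiset σ} {s : σ}, (m.map u).prod = u s → m = {s}

namespace IsAtomSystem

section CommMonoid

variable {σ H : Type*} [CommMonoid H] {u : σ → H}

theorem injective (hu : IsAtomSystem u) : Function.Injective u := fun s t h =>
  Multiset.singleton_inj.1 (hu.eq_singleton (m := {s}) (by simpa using h))

theorem prod_eq_one_iff (hu : IsAtomSystem u) {m : Multiset σ} :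
    (m.map u).prod = 1 ↔ m = 0 := by
  refine ⟨fun h => ?_, by rintro rfl; simp⟩
  by_contra hm
  obtain ⟨s, -⟩ := Multiset.exists_mem_of_ne_zero hm
  have hms : s ::ₘ m = {s} := hu.eq_singleton (by simp [h])
  exact hm (Multiset.cons_inj_right s |>.1 hms)

theorem isUnit_iff (hu : IsAtomSystem u) {a : H} : IsUnit a ↔ a = 1 := by
  refine ⟨fun h => ?_, by rintro rfl; exact isUnit_one⟩
  obtain ⟨b, hab⟩ := h.exists_right_inv
  obtain ⟨m, rfl⟩ := hu.exists_prod_eq a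
  obtain ⟨n, rfl⟩ := hu.exists_prod_eq b
  rw [← Multiset.prod_add, ← Multiset.map_add, hu.prod_eq_one_iff, add_eq_zero] at hab
  exact hu.prod_eq_one_iff.2 hab.1

theorem irreducible (hu : IsAtomSystem u) (s : σ) : Irreducible (u s) := by
  constructor
  · rw [hu.isUnit_iff]
    intro h
    exact Multiset.singleton_ne_zero s (hu.prod_eq_one_iff.1 (by simpa using h))
  · intro a b hab
    obtain ⟨m, rfl⟩ := hu.exists_prod_eq a
    obtain ⟨n, rfl⟩ := hu.exists_prod_eq b
    have hmn : m + n = {s} := hu.eq_singleton (by simp [hab])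
    simp only [hu.isUnit_iff, hu.prod_eq_one_iff]
    have hcard : m.card + n.card = 1 := by rw [← Multiset.card_add, hmn, Multiset.card_singleton]
    rcases Nat.add_eq_one_iff.1 hcard with ⟨hm, -⟩ | ⟨-, hn⟩
    exacts [.inl (Multiset.card_eq_zero.1 hm), .inr (Multiset.card_eq_zero.1 hn)]

theorem irreducible_iff (hu : IsAtomSystem u) {a : H} : Irreducible a ↔ ∃ s, u s = a := by
  refine ⟨fun ha => ?_, by rintro ⟨s, rfl⟩; exact hu.irreducible s⟩
  obtain ⟨m, rfl⟩ := hu.exists_prod_eq a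
  rcases Multiset.empty_or_exists_mem m with rfl | ⟨s, hs⟩
  · exact absurd (by simp) ha.not_isUnit
  · obtain ⟨m, rfl⟩ := Multiset.exists_cons_of_mem hs
    rw [Multiset.map_cons, Multiset.prod_cons] at ha ⊢
    have hm : IsUnit (m.map u).prod :=
      (ha.isUnit_or_isUnit rfl).resolve_left (hu.irreducible s).not_isUnit
    exact ⟨s, by rw [hu.isUnit_iff.1 hm, mul_one]⟩

theorem forall_mem_irreducible_iff (hu : IsAtomSystem u) {l : Multiset H} :
    (∀ x ∈ l, Irreducible x) ↔ ∃ m : Multiset σ, m.map u = l := by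
  simp only [hu.irreducible_iff]
  constructor
  · intro hl
    have : CanLift H σ u fun a => ∃ s, u s = a := ⟨fun _ => id⟩
    lift l to Multiset σ using hl
    exact ⟨l, rfl⟩
  · rintro ⟨m, rfl⟩ x hx
    obtain ⟨s, -, rfl⟩ := Multiset.mem_map.1 hx
    exact ⟨s, rfl⟩

theorem existsUnique_factorization (hu : IsAtomSystem u) {a : H}
    (ha : ∃! m : Multiset σ, (m.map u).prod = a) :
    ∃! l : Multiset H, (∀ x ∈ l, Irreducible x) ∧ l.prod = a := by
  simp only [hu.forall_mem_irreducible_iff]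
  obtain ⟨m, rfl, hm⟩ := ha
  refine ⟨m.map u, ⟨⟨m, rfl⟩, rfl⟩, ?_⟩
  rintro _ ⟨⟨m', rfl⟩, h⟩
  rw [hm m' h]

theorem fg [Finite σ] (hu : IsAtomSystem u) : Monoid.FG H := by
  refine Monoid.fg_iff.2 ⟨Set.range u, eq_top_iff.2 fun a _ => ?_, Set.finite_range u⟩
  obtain ⟨m, rfl⟩ := hu.exists_prod_eq a
  refine Submonoid.multiset_prod_mem _ _ fun x hx => ?_
  obtain ⟨s, -, rfl⟩ := Multiset.mem_map.1 hx
  exact Submonoid.subset_closure ⟨s, rfl⟩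

end CommMonoid

section CancelCommMonoid

variable {σ H : Type*} [CancelCommMonoid H] {u : σ → H}

theorem monoidReduced (hu : IsAtomSystem u) : MonoidReduced H := fun _ => hu.isUnit_iff.1

theorem monoidAtomic (hu : IsAtomSystem u) : MonoidAtomic H := fun a _ => by
  obtain ⟨m, rfl⟩ := hu.exists_prod_eq a
  exact ⟨m.map u, hu.forall_mem_irreducible_iff.2 ⟨m, rfl⟩, rfl⟩

theorem setOfLengths_eq (hu : IsAtomSystem u) (a : H) :
    setOfLengths a = Multiset.card '' {m : Multiset σ | (m.map u).prod = a} := by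
  ext n
  simp only [setOfLengths, hu.isUnit_iff, hu.forall_mem_irreducible_iff]
  constructor
  · rintro (⟨rfl, rfl⟩ | ⟨-, _, rfl, ⟨m, rfl⟩, rfl⟩)
    · exact ⟨0, by simp, rfl⟩
    · exact ⟨m, rfl, (Multiset.card_map u m).symm⟩
  · rintro ⟨m, rfl, rfl⟩
    rcases Multiset.empty_or_exists_mem m with rfl | ⟨s, hs⟩
    · exact .inl ⟨rfl, by simp⟩
    · exact .inr ⟨Multiset.card_pos_iff_exists_mem.2 ⟨s, hs⟩, m.map u, by simp, ⟨m, rfl⟩, rfl⟩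

end CancelCommMonoid

end IsAtomSystem

section Blocks

variable {ι : Type*} (β : ι → Type*) [∀ i, Fintype (β i)]

/-- The `i`-th block of the disjoint union of the `β i`: each of its points taken once. -/
def block (i : ι) : Multiset (Σ i, β i) :=
  (Finset.univ.map (Function.Embedding.sigmaMk i)).val

theorem nodup_block (i : ι) : (block β i).Nodup :=
  Finset.nodup _

theorem card_block (i : ι) : (block β i).card = Fintype.card (β i) := by
  simp [block]

theorem card_bind_block (c : Multiset ι) :
    (c.bind (block β)).card = (c.map fun i => Fintype.card (β i)).sum := by
  simp only [Multiset.card_bind, Function.comp_def, card_block]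

theorem mem_block {i : ι} {s : Σ i, β i} : s ∈ block β i ↔ s.1 = i := by
  obtain ⟨i', j⟩ := s
  constructor
  · intro h
    obtain ⟨j', -, h⟩ := Finset.mem_map.1 h
    exact congrArg Sigma.fst h.symm
  · rintro rfl
    exact Finset.mem_map_of_mem (Function.Embedding.sigmaMk i') (Finset.mem_univ j)

theorem count_bind_block [DecidableEq ι] [DecidableEq (Σ i, β i)] (c : Multiset ι)
    (s : Σ i, β i) : (c.bind (block β)).count s = c.count s.1 := by
  induction c using Multiset.induction_on with
  | empty => simp
  | cons i c ih =>
    rw [Multiset.cons_bind, Multiset.count_add, ih, Multiset.count_cons, add_comm,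
      Multiset.count_eq_of_nodup (nodup_block β i)]
    simp only [mem_block]

variable {β}

theorem block_le_iff {i : ι} {m : Multiset (Σ i, β i)} :
    block β i ≤ m ↔ ∀ j, (⟨i, j⟩ : Σ i, β i) ∈ m := by
  rw [Multiset.le_iff_subset (nodup_block β i)]
  constructor
  · exact fun hle j => hle ((mem_block β).2 rfl)
  · rintro h ⟨i', j⟩ hs
    obtain rfl := (mem_block β).1 hs
    exact h j

/-- Multisets containing no whole block. They encode the elements not divisible by the common
block product, see `EqualProductMonoid.not_blockProd_dvd_iff`. -/
def BlockFree (m : Multiset (Σ i, β i)) : Prop :=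
  ∀ i, ¬ block β i ≤ m

theorem blockFree_replicate [∀ i, Nontrivial (β i)] (n : ℕ) (s : Σ i, β i) :
    BlockFree (Multiset.replicate n s) := by
  intro i hle
  obtain ⟨j, j', hne⟩ := exists_pair_ne (β i)
  have hj := Multiset.eq_of_mem_replicate (block_le_iff.1 hle j)
  have hj' := Multiset.eq_of_mem_replicate (block_le_iff.1 hle j')
  exact hne (sigma_mk_injective (hj.trans hj'.symm))

theorem exists_blockFree_add [∀ i, Nonempty (β i)] (m : Multiset (Σ i, β i)) :
    ∃ (c : Multiset ι) (b : Multiset (Σ i, β i)), BlockFree b ∧ m = c.bind (block β) + b := by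
  induction m using Multiset.strongInductionOn with
  | ih m ih =>
    by_cases hm : BlockFree m
    · exact ⟨0, m, hm, by simp⟩
    · obtain ⟨i, hi⟩ := not_forall_not.1 hm
      obtain ⟨m, rfl⟩ := Multiset.le_iff_exists_add.1 hi
      have hblock : block β i ≠ 0 := by
        simp [← Multiset.card_eq_zero, card_block]
      obtain ⟨c, b, hb, rfl⟩ := ih m (lt_add_of_pos_left m (pos_iff_ne_zero.2 hblock))
      exact ⟨i ::ₘ c, b, hb, by rw [Multiset.cons_bind, add_assoc]⟩

theorem BlockFree.le_of_bind_add_eq {c c' : Multiset ι} {b b' : Multiset (Σ i, β i)}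
    (hb : BlockFree b) (h : c.bind (block β) + b = c'.bind (block β) + b') : c' ≤ c := by
  classical
  refine Multiset.le_iff_count.2 fun i => ?_
  obtain ⟨j, hj⟩ := not_forall.1 (mt block_le_iff.2 (hb i))
  have hcount := congrArg (Multiset.count ⟨i, j⟩) h
  simp only [Multiset.count_add, count_bind_block, Multiset.count_eq_zero.2 hj] at hcount
  omega

theorem BlockFree.eq_and_eq_of_bind_add_eq {c c' : Multiset ι} {b b' : Multiset (Σ i, β i)}
    (hb : BlockFree b) (hb' : BlockFree b')
    (h : c.bind (block β) + b = c'.bind (block β) + b') : c = c' ∧ b = b' := by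
  obtain rfl : c = c' := le_antisymm (hb'.le_of_bind_add_eq h.symm) (hb.le_of_bind_add_eq h)
  exact ⟨rfl, add_left_cancel h⟩

end Blocks

section Presentation

variable {ι : Type*} (β : ι → Type*) [∀ i, Fintype (β i)]

/-- The congruence on multisets of points that identifies all blocks: two multisets are related
when adding equally many blocks to each makes them equal. -/
def blockCon : AddCon (Multiset (Σ i, β i)) where
  r m m' := ∃ c c' : Multiset ι,
    c.card = c'.card ∧ m + c.bind (block β) = m' + c'.bind (block β)
  iseqv := by
    refine ⟨fun m => ⟨0, 0, rfl, rfl⟩, ?_, ?_⟩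
    · rintro m m' ⟨c, c', hcard, h⟩
      exact ⟨c', c, hcard.symm, h.symm⟩
    · rintro m m' m'' ⟨c, c', hc, h⟩ ⟨d, d', hd, h'⟩
      refine ⟨c + d, c' + d', by simp [hc, hd], ?_⟩
      rw [Multiset.add_bind, Multiset.add_bind, ← add_assoc, h, add_right_comm, h', add_assoc,
        add_comm (d'.bind _)]
  add' := by
    rintro m m' n n' ⟨c, c', hc, h⟩ ⟨d, d', hd, h'⟩
    refine ⟨c + d, c' + d', by simp [hc, hd], ?_⟩
    rw [Multiset.add_bind, Multiset.add_bind, add_add_add_comm, h, h', add_add_add_comm]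

/-- The commutative monoid generated by the points of the disjoint union of the `β i`, subject to
the relations that all blocks have the same product. -/
abbrev EqualProductMonoid : Type _ :=
  Multiplicative (blockCon β).Quotient

end Presentation

namespace EqualProductMonoid

variable {ι : Type*} (β : ι → Type*) [∀ i, Fintype (β i)]

instance : CancelCommMonoid (EqualProductMonoid β) where
  mul_left_cancel := by
    intro a b c h
    induction a using AddCon.induction_on with | _ m
    induction b using AddCon.induction_on with | _ n
    induction c using AddCon.induction_on with | _ n'
    obtain ⟨d, d', hd, h⟩ := (AddCon.eq _).1 h
    refine (AddCon.eq _).2 ⟨d, d', hd, ?_⟩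
    rw [add_assoc, add_assoc] at h
    exact add_left_cancel h

/-- The generators of `EqualProductMonoid β`. -/
def gen (s : Σ i, β i) : EqualProductMonoid β :=
  Multiplicative.ofAdd (({s} : Multiset (Σ i, β i)) : (blockCon β).Quotient)

/-- The product of the `i`-th block of generators; it does not depend on `i`, see `blockProd_eq`. -/
def blockProd (i : ι) : EqualProductMonoid β :=
  ∏ j, gen β ⟨i, j⟩

variable {β}

theorem prod_map_gen (m : Multiset (Σ i, β i)) :
    (m.map (gen β)).prod = Multiplicative.ofAdd (m : (blockCon β).Quotient) := by
  induction m using Multiset.induction_on with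
  | empty => rfl
  | cons s m ih => rw [Multiset.map_cons, Multiset.prod_cons, ih]; rfl

theorem prod_map_gen_eq_iff {m m' : Multiset (Σ i, β i)} :
    (m.map (gen β)).prod = (m'.map (gen β)).prod ↔ ∃ c c' : Multiset ι,
      c.card = c'.card ∧ m + c.bind (block β) = m' + c'.bind (block β) := by
  rw [prod_map_gen, prod_map_gen, Multiplicative.ofAdd.injective.eq_iff, AddCon.eq]
  rfl

theorem exists_prod_map_gen_eq (a : EqualProductMonoid β) :
    ∃ m : Multiset (Σ i, β i), (m.map (gen β)).prod = a := by
  obtain ⟨m, hm⟩ := AddCon.mk'_surjective a.toAdd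
  exact ⟨m, (prod_map_gen m).trans hm⟩

theorem prod_map_gen_block (i : ι) : ((block β i).map (gen β)).prod = blockProd β i := by
  simp [block, blockProd]

theorem blockProd_eq (i i' : ι) : blockProd β i = blockProd β i' := by
  rw [← prod_map_gen_block, ← prod_map_gen_block, prod_map_gen_eq_iff]
  exact ⟨{i'}, {i}, rfl, by simp [add_comm]⟩

theorem prod_map_gen_bind_block_add (i : ι) (c : Multiset ι) (b : Multiset (Σ i, β i)) :
    ((c.bind (block β) + b).map (gen β)).prod =
      blockProd β i ^ c.card * (b.map (gen β)).prod := by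
  have hconst : ∀ i', ((block β i').map (gen β)).prod = blockProd β i := fun i' =>
    (prod_map_gen_block i').trans (blockProd_eq i' i)
  simp [Multiset.map_bind, Multiset.prod_bind, hconst]

theorem exists_eq_blockProd_pow_mul [∀ i, Nonempty (β i)] (i : ι) (a : EqualProductMonoid β) :
    ∃ (n : ℕ) (b : Multiset (Σ i, β i)),
      BlockFree b ∧ a = blockProd β i ^ n * (b.map (gen β)).prod := by
  obtain ⟨m, rfl⟩ := exists_prod_map_gen_eq a
  obtain ⟨c, b, hb, rfl⟩ := exists_blockFree_add m
  exact ⟨c.card, b, hb, prod_map_gen_bind_block_add i c b⟩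

theorem blockProd_pow_mul_inj (i : ι) {n n' : ℕ} {b b' : Multiset (Σ i, β i)}
    (hb : BlockFree b) (hb' : BlockFree b') :
    blockProd β i ^ n * (b.map (gen β)).prod = blockProd β i ^ n' * (b'.map (gen β)).prod ↔
      n = n' ∧ b = b' := by
  refine ⟨fun h => ?_, by rintro ⟨rfl, rfl⟩; rfl⟩
  rw [← Multiset.card_replicate n i, ← Multiset.card_replicate n' i,
    ← prod_map_gen_bind_block_add, ← prod_map_gen_bind_block_add, prod_map_gen_eq_iff] at h
  obtain ⟨d, d', hd, h⟩ := h
  rw [add_right_comm, add_right_comm _ b', ← Multiset.add_bind, ← Multiset.add_bind] at h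
  obtain ⟨hc, rfl⟩ := hb.eq_and_eq_of_bind_add_eq hb' h
  have hcard := congrArg Multiset.card hc
  simp only [Multiset.card_add, Multiset.card_replicate] at hcard
  exact ⟨by omega, rfl⟩

theorem prod_map_gen_eq_blockProd_pow_mul_iff [∀ i, Nonempty (β i)] (i : ι) {n : ℕ}
    {m b : Multiset (Σ i, β i)} (hb : BlockFree b) :
    (m.map (gen β)).prod = blockProd β i ^ n * (b.map (gen β)).prod ↔
      ∃ c : Multiset ι, c.card = n ∧ m = c.bind (block β) + b := by
  constructor
  · intro h
    obtain ⟨c, b', hb', rfl⟩ := exists_blockFree_add m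
    rw [prod_map_gen_bind_block_add i, blockProd_pow_mul_inj i hb' hb] at h
    exact ⟨c, h.1, by rw [h.2]⟩
  · rintro ⟨c, rfl, rfl⟩
    exact prod_map_gen_bind_block_add i c b

theorem prod_map_gen_eq_iff_of_blockFree [∀ i, Nonempty (β i)] {m b : Multiset (Σ i, β i)}
    (hb : BlockFree b) : (m.map (gen β)).prod = (b.map (gen β)).prod ↔ m = b := by
  obtain _ | ⟨⟨i⟩⟩ := isEmpty_or_nonempty ι
  · simp [Subsingleton.elim m b]
  · simpa using prod_map_gen_eq_blockProd_pow_mul_iff i (n := 0) (m := m) hb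

theorem not_blockProd_dvd_iff [∀ i, Nonempty (β i)] (i : ι) {m : Multiset (Σ i, β i)} :
    ¬ blockProd β i ∣ (m.map (gen β)).prod ↔ BlockFree m := by
  constructor
  · intro h i' hle
    obtain ⟨m, rfl⟩ := Multiset.le_iff_exists_add.1 hle
    rw [Multiset.map_add, Multiset.prod_add, prod_map_gen_block, blockProd_eq i' i] at h
    exact h (dvd_mul_right _ _)
  · rintro hm ⟨a, ha⟩
    obtain ⟨n, b, hb, rfl⟩ := exists_eq_blockProd_pow_mul i a
    rw [← mul_assoc, ← pow_succ', prod_map_gen_eq_blockProd_pow_mul_iff i hb] at ha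
    obtain ⟨c, hc, rfl⟩ := ha
    obtain ⟨i', c, rfl, -⟩ := Multiset.card_eq_succ_iff.1 hc
    rw [Multiset.cons_bind, add_assoc] at hm
    exact hm i' (Multiset.le_add_right _ _)

variable [∀ i, Nontrivial (β i)]

theorem isAtomSystem_gen : IsAtomSystem (gen β) where
  exists_prod_eq := exists_prod_map_gen_eq
  eq_singleton {m s} h :=
    (prod_map_gen_eq_iff_of_blockFree (blockFree_replicate 1 s)).1 (by simpa using h)

theorem existsUnique_factorization_of_not_dvd {i : ι} {a : EqualProductMonoid β}
    (ha : ¬ blockProd β i ∣ a) :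
    ∃! l : Multiset (EqualProductMonoid β), (∀ x ∈ l, Irreducible x) ∧ l.prod = a := by
  obtain ⟨b, rfl⟩ := exists_prod_map_gen_eq a
  have hb := (not_blockProd_dvd_iff i).1 ha
  exact isAtomSystem_gen.existsUnique_factorization
    ⟨b, rfl, fun _ => (prod_map_gen_eq_iff_of_blockFree hb).1⟩

theorem setOfLengths_blockProd_pow_mul (i : ι) (n : ℕ) {b : Multiset (Σ i, β i)}
    (hb : BlockFree b) :
    setOfLengths (blockProd β i ^ n * (b.map (gen β)).prod) =
      nfoldSumset (Set.range fun i => Fintype.card (β i)) n + {b.card} := by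
  rw [isAtomSystem_gen.setOfLengths_eq, nfoldSumset_range]
  simp only [prod_map_gen_eq_blockProd_pow_mul_iff i hb]
  ext x
  constructor
  · rintro ⟨_, ⟨c, hc, rfl⟩, rfl⟩
    exact ⟨_, ⟨c, hc, rfl⟩, _, rfl, by rw [Multiset.card_add, card_bind_block]⟩
  · rintro ⟨_, ⟨c, hc, rfl⟩, _, rfl, rfl⟩
    exact ⟨_, ⟨c, hc, rfl⟩, by rw [Multiset.card_add, card_bind_block]⟩

theorem existsUnique_blockProd_pow_mul (i : ι) (a : EqualProductMonoid β) :
    ∃! p : ℕ × EqualProductMonoid β, ¬ blockProd β i ∣ p.2 ∧ a = blockProd β i ^ p.1 * p.2 ∧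
      setOfLengths a =
        nfoldSumset (Set.range fun i => Fintype.card (β i)) p.1 + setOfLengths p.2 := by
  obtain ⟨n, b, hb, rfl⟩ := exists_eq_blockProd_pow_mul i a
  have hlengths : setOfLengths (b.map (gen β)).prod = {b.card} := by
    simpa [nfoldSumset] using setOfLengths_blockProd_pow_mul i 0 hb
  refine ⟨(n, (b.map (gen β)).prod), ⟨(not_blockProd_dvd_iff i).2 hb, rfl, ?_⟩, ?_⟩
  · rw [setOfLengths_blockProd_pow_mul i n hb, hlengths]
  · rintro ⟨n', a'⟩ ⟨ha', h, -⟩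
    obtain ⟨b', rfl⟩ := exists_prod_map_gen_eq a'
    obtain ⟨rfl, rfl⟩ :=
      (blockProd_pow_mul_inj i hb ((not_blockProd_dvd_iff i).1 ha')).1 h
    rfl

theorem systemOfLengths_eq [Nonempty ι] :
    systemOfLengths (EqualProductMonoid β) =
      {S | ∃ y n : ℕ,
        S = ({y} : Set ℕ) + nfoldSumset (Set.range fun i => Fintype.card (β i)) n} := by
  obtain ⟨i⟩ := ‹Nonempty ι›
  ext S
  constructor
  · rintro ⟨a, rfl⟩
    obtain ⟨n, b, hb, rfl⟩ := exists_eq_blockProd_pow_mul i a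
    exact ⟨b.card, n, by rw [setOfLengths_blockProd_pow_mul i n hb, add_comm]⟩
  · rintro ⟨y, n, rfl⟩
    obtain ⟨j⟩ : Nonempty (β i) := inferInstance
    refine ⟨_, (setOfLengths_blockProd_pow_mul i n (blockFree_replicate y ⟨i, j⟩)).trans ?_⟩
    rw [Multiset.card_replicate, add_comm]

end EqualProductMonoid

open EqualProductMonoid in
theorem realization_single_indecomposable_general.{w} {ι : Type w} (i₀ : ι) (k : ι → ℕ)
    (hk2 : ∀ i, 2 ≤ k i) :
    ∃ (H : Type w) (_ : CancelCommMonoid H) (u : (i : ι) → Fin (k i) → H),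
      MonoidReduced H ∧ (Finite ι → Monoid.FG H) ∧ MonoidAtomic H ∧
      Function.Injective (fun p : Σ i : ι, Fin (k i) => u p.1 p.2) ∧
      {a : H | Irreducible a} = {a : H | ∃ i j, a = u i j} ∧
      ∃ W : H, W = ∏ j : Fin (k i₀), u i₀ j ∧
        (∀ i : ι, (∏ j : Fin (k i), u i j) = W) ∧
        (∀ b : H, ¬ W ∣ b →
          ∃! l : Multiset H, (∀ x ∈ l, Irreducible x) ∧ l.prod = b) ∧
        (∀ a : H, ∃! p : ℕ × H, ¬ W ∣ p.2 ∧ a = W ^ p.1 * p.2 ∧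
          setOfLengths a = nfoldSumset (Set.range k) p.1 + setOfLengths p.2) ∧
        systemOfLengths H =
          {({0} : Set ℕ), {1}} ∪
            {S | ∃ y n : ℕ, S = ({y} : Set ℕ) + nfoldSumset (Set.range k) n} := by
  have (i : ι) : Nontrivial (Fin (k i)) := Fin.nontrivial_iff_two_le.2 (hk2 i)
  have : Nonempty ι := ⟨i₀⟩
  have hatoms := isAtomSystem_gen (β := fun i => Fin (k i))
  refine ⟨EqualProductMonoid fun i => Fin (k i), inferInstance, fun i j => gen _ ⟨i, j⟩,
    hatoms.monoidReduced, fun _ => hatoms.fg, hatoms.monoidAtomic, hatoms.injective, ?_,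
    blockProd _ i₀, rfl, fun i => blockProd_eq i i₀,
    fun _ => existsUnique_factorization_of_not_dvd,
    fun a => by simpa only [Fintype.card_fin] using existsUnique_blockProd_pow_mul i₀ a, ?_⟩
  · ext a
    simp [hatoms.irreducible_iff, eq_comm]
  · simp only [systemOfLengths_eq, Fintype.card_fin]
    rw [eq_comm, Set.union_eq_right]
    rintro _ (rfl | rfl)
    exacts [⟨0, 0, by simp [nfoldSumset]⟩, ⟨1, 0, by simp [nfoldSumset]⟩]

/-- Proposition 3.1: for `r ≥ 1` and a set `L = {k₁, …, k_r}` of `r` distinct integers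
all `≥ 2`, there is a reduced, finitely generated, atomic, commutative cancellative monoid `H`
whose atoms are pairwise distinct elements `u i j` (`i : Fin r`, `j : Fin (k i)`)
such that, with `W = u_{1,1} ⋯ u_{1,k₁}`:
(a) all products `u_{i,1} ⋯ u_{i,k_i}` are equal to `W`;
(b) every `b ∈ H` not divisible by `W` has exactly one factorization into atoms;
(c) every `a ∈ H` is uniquely `a = Wⁿ b` with `W ∤ b` and `L(a) = nL + L(b)`;
moreover `𝓛(H) = {{0}, {1}} ∪ { y + nL : y, n ∈ ℕ }`. -/
theorem realization_single_indecomposable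
    (r : ℕ) (hr : 1 ≤ r) (k : Fin r → ℕ) (hk2 : ∀ i, 2 ≤ k i)
    (hkinj : Function.Injective k) (L : Set ℕ) (hL : L = Set.range k) :
    ∃ (H : Type) (_ : CancelCommMonoid H) (u : (i : Fin r) → Fin (k i) → H),
      MonoidReduced H ∧ Monoid.FG H ∧ MonoidAtomic H ∧
      Function.Injective (fun p : Σ i : Fin r, Fin (k i) => u p.1 p.2) ∧
      {a : H | Irreducible a} = {a : H | ∃ i j, a = u i j} ∧
      ∃ W : H, W = ∏ j : Fin (k ⟨0, hr⟩), u ⟨0, hr⟩ j ∧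
        (∀ i : Fin r, (∏ j : Fin (k i), u i j) = W) ∧
        (∀ b : H, ¬ W ∣ b →
          ∃! l : Multiset H, (∀ x ∈ l, Irreducible x) ∧ l.prod = b) ∧
        (∀ a : H, ∃! p : ℕ × H, ¬ W ∣ p.2 ∧ a = W ^ p.1 * p.2 ∧
          setOfLengths a = nfoldSumset L p.1 + setOfLengths p.2) ∧
        systemOfLengths H =
          {({0} : Set ℕ), {1}} ∪ {S | ∃ y n : ℕ, S = ({y} : Set ℕ) + nfoldSumset L n} := by
  obtain ⟨H, _, u, hreduced, hfg, h⟩ := realization_single_indecomposable_general ⟨0, hr⟩ k hk2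
  exact ⟨H, _, u, hreduced, hfg inferInstance, hL ▸ h⟩
end

section
/- Let H be an atomic commutative cancellative monoid whose associated reduced monoid H/H^× is finitely generated. If 𝓛(H) is additively closed (i.e., L₁ + L₂ ∈ 𝓛(H) for all L₁, L₂ ∈ 𝓛(H)), then 𝓛(H) is a finitely generated semigroup under sumset addition: there exist finitely many sets L₁, …, L_m ∈ 𝓛(H) such that every member of 𝓛(H) is a finite sum of sets from {L₁, …, L_m} (together with the identity element {0}). -/
open Pointwise

/-!
In a reduced finitely generated cancellative monoid, send `x` to the upper set generated by its set
of factorizations `Z(x)` in the free commutative monoid on the finitely many atoms. Upper sets of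
`ℕⁿ` are well-quasi-ordered by reverse inclusion (Maclagan's theorem on monomial ideals), so there
is a finite set of `x ≠ 1` such that for each `y ≠ 1`, some `x` in it satisfies: every factorization
of `y` contains a factorization of `x`. By cancellation, `Z(y) = Z(x) + Z(y / x)`. Iterating, every
`Z(y)` is a sum of sets `Z(x)` with `x` in that finite set. Taking cardinalities of multisets
carries this over to sets of lengths.
-/

section WellQuasiOrder

variable {ι α Q : Type*}

theorem exists_forall_le_apply_of_antitone [Preorder ι] [Nonempty ι] [IsDirectedOrder ι]
    [Preorder Q] [WellFoundedLT Q] {f : ι → Q} (hf : Antitone f) : ∃ i, ∀ j, f i ≤ f j := by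
  obtain ⟨i, -, hi⟩ :=
    exists_minimalFor_of_wellFoundedLT (fun _ : ι ↦ True) f ⟨Classical.arbitrary ι, trivial⟩
  refine ⟨i, fun j ↦ ?_⟩
  obtain ⟨k, hik, hjk⟩ := exists_ge_ge i j
  exact (hi trivial (hf hik)).trans (hf hjk)

theorem exists_finite_subset_forall_exists_apply_le [PartialOrder Q] [WellQuasiOrderedLE Q]
    (f : α → Q) (s : Set α) : ∃ t ⊆ s, t.Finite ∧ ∀ y ∈ s, ∃ x ∈ t, f x ≤ f y := by
  have hfin : {q | Minimal (· ∈ f '' s) q}.Finite :=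
    WellQuasiOrderedLE.finite_of_isAntichain (setOfPred_minimal_antichain _)
  have hle : ∀ y ∈ s, ∃ q ∈ {q | Minimal (· ∈ f '' s) q}, q ≤ f y := fun y hy ↦
    let ⟨q, hqy, hq⟩ := exists_minimal_le_of_wellFoundedLT _ _ (Set.mem_image_of_mem f hy)
    ⟨q, hq, hqy⟩
  obtain ⟨t, hts, htfin, ht⟩ : ∃ t ⊆ s, t.Finite ∧ ∀ y ∈ s, ∃ q ∈ f '' t, q ≤ f y :=
    (Set.exists_subset_image_finite_and (p := fun t ↦ ∀ y ∈ s, ∃ q ∈ t, q ≤ f y)).1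
      ⟨_, fun _ hq ↦ hq.prop, hfin, hle⟩
  exact ⟨t, hts, htfin, fun y hy ↦ Set.exists_mem_image.1 (ht y hy)⟩

theorem exists_ge_getElem_of_sublistForall₂ {β : Type*} {r : α → β → Prop} {l₁ : List α}
    {l₂ : List β} (h : List.SublistForall₂ r l₁ l₂) (k : ℕ) (hk : k < l₁.length) :
    ∃ j, ∃ hj : j < l₂.length, k ≤ j ∧ r l₁[k] l₂[j] := by
  induction h generalizing k with
  | nil => simp at hk
  | cons hr _ ih =>
    cases k with
    | zero => exact ⟨0, by simp, le_rfl, hr⟩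
    | succ k =>
      obtain ⟨j, hj, hkj, hr⟩ := ih k (by simpa using hk)
      exact ⟨j + 1, by simpa using hj, by simpa using hkj, by simpa using hr⟩
  | cons_right _ ih =>
    obtain ⟨j, hj, hkj, hr⟩ := ih k hk
    exact ⟨j + 1, by simpa using hj, by lia, by simpa using hr⟩

theorem wellQuasiOrdered_sublistForall₂ [Preorder Q] [WellQuasiOrderedLE Q] :
    WellQuasiOrdered (List.SublistForall₂ ((· ≤ ·) : Q → Q → Prop)) := by
  have higman := Set.PartiallyWellOrderedOn.partiallyWellOrderedOn_sublistForall₂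
    ((· ≤ ·) : Q → Q → Prop) (Set.partiallyWellOrderedOn_univ_iff.2 wellQuasiOrdered_le)
  simpa [Set.partiallyWellOrderedOn_univ_iff] using higman

-- An antitone sequence is determined up to equivalence by the finite list of its terms before it
-- reaches its minimum together with that minimum, so Higman's lemma applies.
instance wellQuasiOrderedLE_antitone_nat [Preorder Q] [WellQuasiOrderedLE Q] :
    WellQuasiOrderedLE {f : ℕ → Q // Antitone f} := by
  refine ⟨fun F ↦ ?_⟩
  choose s hs using fun i ↦ exists_forall_le_apply_of_antitone (F i).2
  have : IsPreorder (List Q) (List.SublistForall₂ (· ≤ ·)) := {}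
  obtain ⟨i, j, hij, hlist, hmin⟩ :=
    wellQuasiOrdered_sublistForall₂.prod (wellQuasiOrdered_le (α := Q))
      fun i ↦ ((List.range (s i)).map (F i).1, (F i).1 (s i))
  refine ⟨i, j, hij, fun k ↦ ?_⟩
  rcases lt_or_ge k (s i) with hk | hk
  · obtain ⟨l, hl, hkl, hle⟩ := exists_ge_getElem_of_sublistForall₂ hlist k (by simpa using hk)
    simp only [List.getElem_map, List.getElem_range] at hle
    exact hle.trans ((F j).2 hkl)
  · exact ((F i).2 hk).trans (hmin.trans (hs j k))

instance wellQuasiOrderedLE_upperSet_nat_prod [Preorder α] [WellQuasiOrderedLE (UpperSet α)] :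
    WellQuasiOrderedLE (UpperSet (ℕ × α)) := by
  refine ⟨fun I ↦ ?_⟩
  let slice (i k : ℕ) : UpperSet α :=
    ⟨{x | (k, x) ∈ I i}, fun _ _ hxy hx ↦ (I i).upper (Prod.mk_le_mk.2 ⟨le_rfl, hxy⟩) hx⟩
  have slice_antitone (i : ℕ) : Antitone (slice i) :=
    fun _ _ hkl _ hx ↦ (I i).upper (Prod.mk_le_mk.2 ⟨hkl, le_rfl⟩) hx
  obtain ⟨i, j, hij, hle⟩ := wellQuasiOrdered_le
    fun i ↦ (⟨slice i, slice_antitone i⟩ : {f : ℕ → UpperSet α // Antitone f})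
  exact ⟨i, j, hij, fun ⟨k, _⟩ hx ↦ hle k hx⟩

theorem wellQuasiOrderedLE_upperSet_fin_nat (n : ℕ) :
    WellQuasiOrderedLE (UpperSet (Fin n → ℕ)) := by
  induction n with
  | zero =>
    have : Finite (UpperSet (Fin 0 → ℕ)) := Finite.of_injective _ SetLike.coe_injective
    exact Finite.to_wellQuasiOrderedLE
  | succ n ih =>
    exact (UpperSet.map (Fin.consOrderIso fun _ ↦ ℕ)).wellQuasiOrderedLE_iff.1 inferInstance

instance wellQuasiOrderedLE_upperSet_multiset [Finite α] :
    WellQuasiOrderedLE (UpperSet (Multiset α)) := by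
  classical
  obtain ⟨n, ⟨e⟩⟩ := Finite.exists_equiv_fin α
  have := wellQuasiOrderedLE_upperSet_fin_nat n
  let reindex : (Fin n → ℕ) ≃o (α → ℕ) :=
    { toEquiv := e.symm.arrowCongr (.refl ℕ)
      map_rel_iff' := (e.surjective.forall (p := fun _ ↦ _ ≤ _)).symm }
  exact (UpperSet.map
    ((reindex.trans Finsupp.orderIsoFunOnFinite.symm).trans
      Finsupp.orderIsoMultiset)).wellQuasiOrderedLE_iff.1 this

end WellQuasiOrder

section Factorizations

variable {M : Type*}

/-- The set of factorizations `Z(x)` of an element `x` of a reduced monoid: the multisets of atoms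
with product `x`. -/
def factorizations [CommMonoid M] (x : M) : Set (Multiset {u : M // Irreducible u}) :=
  {z | (z.map Subtype.val).prod = x}

theorem factorizations_one [CommMonoid M] : factorizations (1 : M) = 0 := by
  refine Set.eq_singleton_iff_unique_mem.2 ⟨by simp [factorizations], fun z hz ↦ ?_⟩
  refine Multiset.eq_zero_of_forall_notMem fun u hu ↦ u.2.not_isUnit ?_
  exact isUnit_of_dvd_one (hz ▸ Multiset.dvd_prod (Multiset.mem_map_of_mem _ hu))

theorem factorizations_add_subset [CommMonoid M] (x y : M) :
    factorizations x + factorizations y ⊆ factorizations (x * y) := by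
  rintro _ ⟨z, rfl, w, rfl, rfl⟩
  simp [factorizations]

theorem factorizations_mul [CancelCommMonoid M] {x y : M}
    (h : ∀ z ∈ factorizations (x * y), ∃ w ∈ factorizations x, w ≤ z) :
    factorizations (x * y) = factorizations x + factorizations y := by
  refine (factorizations_add_subset x y).antisymm' fun z hz ↦ ?_
  obtain ⟨w, hw, hwz⟩ := h z hz
  obtain ⟨v, rfl⟩ := Multiset.le_iff_exists_add.1 hwz
  have hprod : (w.map Subtype.val).prod * (v.map Subtype.val).prod = x * y := by
    rwa [← Multiset.prod_add, ← Multiset.map_add]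
  rw [show (w.map Subtype.val).prod = x from hw] at hprod
  exact Set.add_mem_add hw (mul_left_cancel hprod)

variable [CancelCommMonoid M] [Subsingleton Mˣ] [Monoid.FG M]

theorem factorizations_nonempty (x : M) : (factorizations x).Nonempty := by
  have hx : x ∈ Submonoid.closure {u : M | Irreducible u} := by simp
  obtain ⟨l, hl, rfl⟩ := Submonoid.exists_multiset_of_mem_closure hx
  lift l to Multiset {u : M // Irreducible u} using hl
  exact ⟨l, rfl⟩

theorem exists_finite_forall_factorizations_eq_add : ∃ S : Set M, S.Finite ∧ 1 ∉ S ∧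
    ∀ y ≠ 1, ∃ x ∈ S, ∃ d, factorizations y = factorizations x + factorizations d := by
  have : Finite {u : M // Irreducible u} := finite_irreducible.to_subtype
  obtain ⟨S, hS, hfin, hle⟩ := exists_finite_subset_forall_exists_apply_le
    (fun x : M ↦ upperClosure (factorizations x)) {1}ᶜ
  refine ⟨S, hfin, fun h ↦ hS h rfl, fun y hy ↦ ?_⟩
  obtain ⟨x, hx, hxy⟩ := hle y hy
  have dominated : ∀ z ∈ factorizations y, ∃ w ∈ factorizations x, w ≤ z :=
    fun z hz ↦ hxy (subset_upperClosure hz)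
  obtain ⟨d, rfl⟩ : x ∣ y := by
    obtain ⟨z, rfl⟩ := factorizations_nonempty y
    obtain ⟨w, rfl, hwz⟩ := dominated z rfl
    exact Multiset.prod_dvd_prod_of_le (Multiset.map_le_map hwz)
  exact ⟨x, hx, d, factorizations_mul dominated⟩

theorem exists_finite_forall_factorizations_mem_closure : ∃ S : Set M, S.Finite ∧
    ∀ y : M, factorizations y ∈ AddSubmonoid.closure (factorizations '' S) := by
  obtain ⟨S, hfin, hone, hS⟩ := exists_finite_forall_factorizations_eq_add (M := M)
  refine ⟨S, hfin, fun y ↦ ?_⟩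
  obtain ⟨z, hz⟩ := factorizations_nonempty y
  induction z using Multiset.strongInductionOn generalizing y with
  | _ z ih =>
    rcases eq_or_ne y 1 with rfl | hy
    · exact factorizations_one (M := M) ▸ zero_mem _
    obtain ⟨x, hx, d, hd⟩ := hS y hy
    obtain ⟨w, hw, v, hv, rfl⟩ := hd ▸ hz
    have hw0 : w ≠ 0 := by
      rintro rfl
      obtain rfl : 1 = x := hw
      exact hone hx
    rw [hd]
    exact add_mem (AddSubmonoid.subset_closure ⟨x, hx, rfl⟩)
      (ih v (lt_add_of_pos_left v (pos_iff_ne_zero.2 hw0)) d hv)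

end Factorizations

section SetsOfLengths

variable {H : Type*}

theorem irreducible_associates_mk [CommMonoid H] {a : H} :
    Irreducible (Associates.mk a) ↔ Irreducible a := by
  simp only [irreducible_iff (p := Associates.mk a), Associates.isUnit_mk,
    Associates.forall_associated, Associates.mk_mul_mk, Associates.mk_eq_mk_iff_associated]
  exact ⟨fun h ↦ ⟨h.1, fun b c hbc ↦ h.2 b c (.of_eq hbc)⟩,
    fun h ↦ ⟨h.not_isUnit, fun b c hbc ↦ of_irreducible_mul (hbc.irreducible h)⟩⟩

instance cancelCommMonoidAssociates [CancelCommMonoid H] : CancelCommMonoid (Associates H) where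
  mul_left_cancel := by
    simp only [IsLeftRegular, Function.Injective, Associates.forall_associated,
      Associates.mk_mul_mk, Associates.mk_eq_mk_iff_associated]
    rintro a b c ⟨u, hu⟩
    exact ⟨u, mul_left_cancel (by rwa [← mul_assoc])⟩

theorem exists_prod_eq_and_map_associates_mk_eq [CommMonoid H] {z : Multiset (Associates H)}
    (hz : z ≠ 0) {a : H} (h : z.prod = Associates.mk a) :
    ∃ l : Multiset H, l.prod = a ∧ l.map Associates.mk = z := by
  obtain ⟨p, hp⟩ := Multiset.exists_mem_of_ne_zero hz
  obtain ⟨z, rfl⟩ := Multiset.exists_cons_of_mem hp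
  obtain ⟨b, rfl⟩ := Associates.mk_surjective p
  obtain ⟨l, rfl⟩ := Multiset.map_surjective_of_surjective Associates.mk_surjective z
  rw [Multiset.prod_cons, Associates.prod_mk, Associates.mk_mul_mk,
    Associates.mk_eq_mk_iff_associated] at h
  obtain ⟨u, hu⟩ := h
  refine ⟨(b * u) ::ₘ l, by rw [← hu, Multiset.prod_cons, mul_right_comm], ?_⟩
  rw [Multiset.map_cons,
    Associates.mk_eq_mk_iff_associated.2 (associated_mul_unit_left b u u.isUnit)]

theorem setOfLengths_eq_image_card [CancelCommMonoid H] (a : H) :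
    setOfLengths a = Multiset.card '' factorizations (Associates.mk a) := by
  ext k
  constructor
  · rintro (⟨rfl, ha⟩ | ⟨-, l, rfl, hl, rfl⟩)
    · exact ⟨0, by simp [factorizations, Associates.mk_eq_one.2 ha], rfl⟩
    · have hmk : ∀ u ∈ l.map Associates.mk, Irreducible u :=
        Multiset.forall_mem_map_iff.2 fun x hx ↦ irreducible_associates_mk.2 (hl x hx)
      obtain ⟨z, hz⟩ : ∃ z : Multiset {u : Associates H // Irreducible u},
        z.map Subtype.val = l.map Associates.mk := CanLift.prf _ hmk
      refine ⟨z, (congrArg Multiset.prod hz).trans Associates.prod_mk, ?_⟩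
      simpa using congrArg Multiset.card hz
  · rintro ⟨z, hz, rfl⟩
    rcases eq_or_ne z 0 with rfl | hz0
    · exact .inl ⟨rfl, Associates.mk_eq_one.1 hz.symm⟩
    · obtain ⟨l, rfl, hl⟩ := exists_prod_eq_and_map_associates_mk_eq
        (mt Multiset.map_eq_zero.1 hz0) hz
      refine .inr ⟨Multiset.card_pos.2 hz0, l, by simpa using congrArg Multiset.card hl,
        fun x hx ↦ irreducible_associates_mk.1 ?_, rfl⟩
      obtain ⟨u, -, hu⟩ := Multiset.mem_map.1 (hl ▸ Multiset.mem_map_of_mem Associates.mk hx)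
      exact hu ▸ u.2

theorem exists_finite_subset_systemOfLengths_subset_closure [CancelCommMonoid H]
    [Monoid.FG (Associates H)] : ∃ T ⊆ systemOfLengths H, T.Finite ∧
      systemOfLengths H ⊆ AddSubmonoid.closure T := by
  obtain ⟨S, hfin, hS⟩ := exists_finite_forall_factorizations_mem_closure (M := Associates H)
  refine ⟨Set.image Multiset.card '' (factorizations '' S), ?_, (hfin.image _).image _, ?_⟩
  · rintro _ ⟨_, ⟨x, -, rfl⟩, rfl⟩
    obtain ⟨a, rfl⟩ := Associates.mk_surjective x
    exact ⟨a, setOfLengths_eq_image_card a⟩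
  · rintro _ ⟨a, rfl⟩
    let lengths : Set (Multiset {u : Associates H // Irreducible u}) →+ Set ℕ :=
      { toFun := Set.image Multiset.card
        map_zero' := Set.image_singleton
        map_add' := fun _ _ ↦ Set.image_add Multiset.cardHom }
    rw [setOfLengths_eq_image_card]
    exact (AddMonoidHom.map_mclosure lengths _).le (AddSubmonoid.mem_map_of_mem lengths (hS _))

end SetsOfLengths

theorem system_finitely_generated_of_additively_closed_general {H : Type*} [CancelCommMonoid H]
    (hfg : Monoid.FG (Associates H)) :
    ∃ (m : ℕ) (L : Fin m → Set ℕ),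
      (∀ i, L i ∈ systemOfLengths H) ∧
      ∀ S ∈ systemOfLengths H, ∃ c : Multiset (Fin m), S = ((c.map L).sum) := by
  obtain ⟨T, hT, hfin, hgen⟩ := exists_finite_subset_systemOfLengths_subset_closure (H := H)
  obtain ⟨m, L, -, rfl⟩ := hfin.fin_param
  refine ⟨m, L, fun i ↦ hT ⟨i, rfl⟩, fun S hS ↦ ?_⟩
  obtain ⟨s, hs, rfl⟩ := AddSubmonoid.exists_multiset_of_mem_closure (hgen hS)
  have : CanLift (Set ℕ) (Fin m) L (· ∈ Set.range L) := ⟨fun _ ↦ id⟩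
  lift s to Multiset (Fin m) using hs
  exact ⟨s, rfl⟩

/-- Let `H` be an atomic commutative cancellative monoid whose associated reduced monoid
`H/H^×` (the monoid of associates) is finitely generated. If `𝓛(H)` is additively closed,
then `𝓛(H)` is a finitely generated semigroup under sumset addition: there are finitely many
`L₁, …, L_m ∈ 𝓛(H)` such that every member of `𝓛(H)` is a finite (possibly empty, yielding
the identity `{0}`) sum of sets from `{L₁, …, L_m}`. -/
theorem system_finitely_generated_of_additively_closed {H : Type*} [CancelCommMonoid H]
    (hatomic : MonoidAtomic H) (hfg : Monoid.FG (Associates H))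
    (hclosed : ∀ L₁ ∈ systemOfLengths H, ∀ L₂ ∈ systemOfLengths H,
      L₁ + L₂ ∈ systemOfLengths H) :
    ∃ (m : ℕ) (L : Fin m → Set ℕ),
      (∀ i, L i ∈ systemOfLengths H) ∧
      ∀ S ∈ systemOfLengths H, ∃ c : Multiset (Fin m), S = ((c.map L).sum) :=
  system_finitely_generated_of_additively_closed_general hfg
end
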